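/- arXiv:math/0509720 — 2 statements merged into one kernel-verified Lean document; each statement's English description precedes it below -/
import Mathlib

section
/- Fix n ≥ 1, t > 0 and (x',y') ∈ ℝ^{n+1}×ℝ^n. If (x,y) ∈ ℝ^{n+1}×ℝ^n satisfies x_{i+1} = y_i for some i ∈ {1,…,n}, then the partial derivative ∂/∂x_{i+1} of the function x ↦ q^n_t((x,y),(x',y')) vanishes at that point: ∂q^n_t/∂x_{i+1}((x,y),(x',y')) = 0. -/
open MeasureTheory Real

/-- The centered Gaussian density with variance `t`. -/
noncomputable def gauss (t y : ℝ) : ℝ :=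
  (Real.sqrt (2 * Real.pi * t))⁻¹ * Real.exp (-y ^ 2 / (2 * t))

/-- The Gaussian cumulative distribution function `Φ_t`. -/
noncomputable def gaussCDF (t y : ℝ) : ℝ := ∫ z in Set.Iic y, gauss t z

/-- The derivative `φ'_t` of the Gaussian density. -/
noncomputable def gaussDeriv (t y : ℝ) : ℝ :=
  -y / Real.sqrt (2 * Real.pi * t ^ 3) * Real.exp (-y ^ 2 / (2 * t))

/-- The kernel `q^n_t((x,y),(x',y'))`, a `(2n+1)×(2n+1)` block determinant. -/
noncomputable def qKer (n : ℕ) (t : ℝ) (x x' : Fin (n + 1) → ℝ) (y y' : Fin n → ℝ) : ℝ :=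
  Matrix.det (Matrix.fromBlocks
    (Matrix.of fun i j : Fin (n + 1) => gauss t (x' j - x i))
    (Matrix.of fun (i : Fin (n + 1)) (j : Fin n) =>
      gaussCDF t (y' j - x i) - (if (i : ℕ) ≤ (j : ℕ) then (1 : ℝ) else 0))
    (Matrix.of fun (i : Fin n) (j : Fin (n + 1)) => gaussDeriv t (x' j - y i))
    (Matrix.of fun i j : Fin n => gauss t (y' j - y i)))

/-!
Since `φ'_t` is the derivative of `φ_t` and `φ_t` that of `Φ_t`, differentiating the row of the
matrix of `q^n_t` attached to `x_r` turns it, up to sign, into a row of the lower blocks with `x_r`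
in place of some `y_s`; the constant indicators disappear. The determinant is linear in that row, so
`∂q^n_t/∂x_r` is minus the determinant of the matrix with that row replaced. When `x_r = y_s` this
matrix has two equal rows.
-/

section Calculus

variable {E : Type*} [NormedAddCommGroup E] [NormedSpace ℝ E] [CompleteSpace E]

theorem hasDerivAt_integral_Iic {f : ℝ → E} {a b : ℝ} (hab : a < b)
    (hf : IntegrableOn f (Set.Iic b)) (ha : ContinuousAt f a) :
    HasDerivAt (fun u => ∫ z in Set.Iic u, f z) (f a) a := by
  have integrableOn_Iic {u : ℝ} (hu : u ≤ b) : IntegrableOn f (Set.Iic u) :=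
    hf.mono_set (Set.Iic_subset_Iic.2 hu)
  have intervalIntegrable : IntervalIntegrable f volume b a :=
    (hf.mono_set (Set.uIcc_of_ge hab.le ▸ Set.Icc_subset_Iic_self)).intervalIntegrable
  have measurable_near_a : StronglyMeasurableAtFilter f (nhds a) :=
    ⟨Set.Iic b, Iic_mem_nhds hab, hf.aestronglyMeasurable⟩
  refine ((intervalIntegral.integral_hasDerivAt_right intervalIntegrable measurable_near_a
    ha).const_add (∫ z in Set.Iic b, f z)).congr_of_eventuallyEq ?_
  filter_upwards [Iio_mem_nhds hab] with u hu
  rw [← intervalIntegral.integral_Iic_sub_Iic hf (integrableOn_Iic hu.le), add_sub_cancel]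

end Calculus

section Determinant

variable {𝕜 m : Type*} [NontriviallyNormedField 𝕜] [Fintype m] [DecidableEq m]

theorem hasDerivAt_det_updateRow (M : Matrix m m 𝕜) (i : m) {v : 𝕜 → m → 𝕜} {v' : m → 𝕜} {a : 𝕜}
    (hv : HasDerivAt v v' a) :
    HasDerivAt (fun b => (M.updateRow i (v b)).det) (M.updateRow i v').det a := by
  let detRow : (m → 𝕜) →L[𝕜] 𝕜 :=
    ⟨LinearMap.proj i ∘ₗ M.transpose.cramer, LinearMap.continuous_on_pi _⟩
  have detRow_apply (w : m → 𝕜) : detRow w = (M.updateRow i w).det :=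
    M.cramer_transpose_apply w i
  simp only [← detRow_apply]
  exact detRow.hasFDerivAt.comp_hasDerivAt a hv

end Determinant

section Gaussian

variable {t : ℝ}

theorem gauss_eq_gaussianPDFReal (ht : 0 ≤ t) :
    gauss t = ProbabilityTheory.gaussianPDFReal 0 t.toNNReal := by
  ext y
  simp [gauss, ProbabilityTheory.gaussianPDFReal, ht]

theorem integrable_gauss (ht : 0 ≤ t) : Integrable (gauss t) := by
  rw [gauss_eq_gaussianPDFReal ht]
  exact ProbabilityTheory.integrable_gaussianPDFReal 0 t.toNNReal

theorem hasDerivAt_gauss (ht : 0 < t) (y : ℝ) : HasDerivAt (gauss t) (gaussDeriv t y) y := by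
  have exponent : HasDerivAt (fun z : ℝ => -z ^ 2 / (2 * t)) (-(2 * y) / (2 * t)) y := by
    simpa using (hasDerivAt_pow 2 y).neg.div_const (2 * t)
  have sqrt_variance_cubed : √(2 * π * t ^ 3) = t * √(2 * π * t) := by
    rw [show 2 * π * t ^ 3 = t ^ 2 * (2 * π * t) by ring, sqrt_mul (by positivity), sqrt_sq ht.le]
  refine (exponent.exp.const_mul (√(2 * π * t))⁻¹).congr_deriv ?_
  rw [gaussDeriv, sqrt_variance_cubed]
  field_simp

theorem hasDerivAt_gaussCDF (ht : 0 < t) (y : ℝ) : HasDerivAt (gaussCDF t) (gauss t y) y :=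
  hasDerivAt_integral_Iic (lt_add_one y) (integrable_gauss ht.le).integrableOn
    (hasDerivAt_gauss ht y).continuousAt

end Gaussian

section Kernel

variable {n : ℕ} {t : ℝ}

/-- The row of the matrix of `q^n_t` in the upper blocks `[A, B]` with index `i`, as a function of
the value `a` of `x_i`. -/
noncomputable def qUpperRow (t : ℝ) (x' : Fin (n + 1) → ℝ) (y' : Fin n → ℝ) (i : Fin (n + 1))
    (a : ℝ) : Fin (n + 1) ⊕ Fin n → ℝ :=
  Sum.elim (fun j => gauss t (x' j - a))
    (fun j => gaussCDF t (y' j - a) - if (i : ℕ) ≤ (j : ℕ) then (1 : ℝ) else 0)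

/-- A row of the matrix of `q^n_t` in the lower blocks `[C, D]`, as a function of the value `b` of
the corresponding `y_i`; unlike `qUpperRow` it depends on the index `i` only through `b`. -/
noncomputable def qLowerRow (t : ℝ) (x' : Fin (n + 1) → ℝ) (y' : Fin n → ℝ) (b : ℝ) :
    Fin (n + 1) ⊕ Fin n → ℝ :=
  Sum.elim (fun j => gaussDeriv t (x' j - b)) (fun j => gauss t (y' j - b))

/-- The matrix whose determinant is `q^n_t((x,y),(x',y'))`, given by its rows. -/
noncomputable def qMatrix (t : ℝ) (x x' : Fin (n + 1) → ℝ) (y y' : Fin n → ℝ) :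
    Matrix (Fin (n + 1) ⊕ Fin n) (Fin (n + 1) ⊕ Fin n) ℝ :=
  Matrix.of (Sum.elim (fun i => qUpperRow t x' y' i (x i)) (fun i => qLowerRow t x' y' (y i)))

theorem qKer_eq_det_qMatrix (t : ℝ) (x x' : Fin (n + 1) → ℝ) (y y' : Fin n → ℝ) :
    qKer n t x x' y y' = (qMatrix t x x' y y').det :=
  congrArg Matrix.det <| by ext (i | i) (j | j) <;> rfl

theorem qMatrix_update (t : ℝ) (x x' : Fin (n + 1) → ℝ) (y y' : Fin n → ℝ) (r : Fin (n + 1))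
    (a : ℝ) :
    qMatrix t (Function.update x r a) x' y y' =
      (qMatrix t x x' y y').updateRow (Sum.inl r) (qUpperRow t x' y' r a) := by
  ext (i | i) j
  · obtain rfl | hir := eq_or_ne i r
    · simp [qMatrix]
    · simp [qMatrix, Matrix.updateRow_apply, hir]
  · simp [qMatrix, Matrix.updateRow_apply]

theorem hasDerivAt_qUpperRow (ht : 0 < t) (x' : Fin (n + 1) → ℝ) (y' : Fin n → ℝ)
    (i : Fin (n + 1)) (a : ℝ) :
    HasDerivAt (qUpperRow t x' y' i) (-qLowerRow t x' y' a) a := by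
  refine hasDerivAt_pi.2 ?_
  rintro (j | j)
  · exact (hasDerivAt_gauss ht _).comp_const_sub (x' j) a
  · exact ((hasDerivAt_gaussCDF ht _).comp_const_sub (y' j) a).sub_const _

theorem hasDerivAt_qKer_update (ht : 0 < t) (x x' : Fin (n + 1) → ℝ) (y y' : Fin n → ℝ)
    (r : Fin (n + 1)) (a : ℝ) :
    HasDerivAt (fun b => qKer n t (Function.update x r b) x' y y')
      (-((qMatrix t x x' y y').updateRow (Sum.inl r) (qLowerRow t x' y' a)).det) a := by
  simp only [qKer_eq_det_qMatrix, qMatrix_update]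
  refine (hasDerivAt_det_updateRow _ _ (hasDerivAt_qUpperRow ht x' y' r a)).congr_deriv ?_
  rw [← neg_one_smul ℝ, Matrix.det_updateRow_smul, neg_one_mul]

theorem stmt3_general (ht : 0 < t) {x : Fin (n + 1) → ℝ} (x' : Fin (n + 1) → ℝ) {y : Fin n → ℝ}
    (y' : Fin n → ℝ) {r : Fin (n + 1)} {s : Fin n} (hxy : x r = y s) :
    HasDerivAt (fun a => qKer n t (Function.update x r a) x' y y') 0 (x r) := by
  have lowerRow_eq : qLowerRow t x' y' (x r) = qMatrix t x x' y y' (Sum.inr s) :=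
    congrArg (qLowerRow t x' y') hxy
  refine (hasDerivAt_qKer_update ht x x' y y' r (x r)).congr_deriv ?_
  rw [lowerRow_eq, Matrix.det_updateRow_eq_zero Sum.inr_ne_inl, neg_zero]

end Kernel

/-- If `x_{i+1} = y_i`, then `∂q^n_t/∂x_{i+1}((x,y),(x',y')) = 0`. -/
theorem stmt3 (n : ℕ) (hn : 1 ≤ n) (t : ℝ) (ht : 0 < t)
    (x x' : Fin (n + 1) → ℝ) (y y' : Fin n → ℝ)
    (i : ℕ) (hi : i < n) (hxy : x ⟨i + 1, by omega⟩ = y ⟨i, hi⟩) :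
    deriv (fun a => qKer n t (Function.update x ⟨i + 1, by omega⟩ a) x' y y')
      (x ⟨i + 1, by omega⟩) = 0 := by
  exact (stmt3_general ht x' y' hxy).deriv
end

section
/- Entrance law for the non-colliding kernel: let n ≥ 1. For all s, t > 0 and all x' ∈ W^n, ∫_{W^n} Z_n^{−1} s^{−n²/2} exp(−Σ_i x_i²/(2s)) h_n(x) h_n(x') p^n_t(x,x') dx = μ^n_{t+s}(x'); equivalently, ∫_{W^n} μ^n_s(x) p^{n,+}_t(x,x') dx = μ^n_{t+s}(x'), where p^{n,+}_t(x,x') = (h_n(x')/h_n(x)) p^n_t(x,x'). -/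
open MeasureTheory Real

/-- The Karlin–McGregor kernel `p^m_t(x,x') = det{φ_t(x'_j − x_i)}`. -/
noncomputable def pKer (m : ℕ) (t : ℝ) (x x' : Fin m → ℝ) : ℝ :=
  Matrix.det (Matrix.of fun i j : Fin m => gauss t (x' j - x i))

/-- The Vandermonde product `h_m(z) = ∏_{i<j} (z_j − z_i)`. -/
noncomputable def vand (m : ℕ) (z : Fin m → ℝ) : ℝ :=
  ∏ j : Fin m, ∏ i ∈ Finset.Iio j, (z j - z i)

/-- The normalising constant `Z_m = (2π)^{m/2} ∏_{j=1}^{m−1} j!`. -/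
noncomputable def Zconst (m : ℕ) : ℝ :=
  (2 * Real.pi) ^ ((m : ℝ) / 2) * ∏ j ∈ Finset.range m, (Nat.factorial j : ℝ)

/-- The entrance law density `μ^n_t(y) = Z_n^{-1} t^{-n²/2} exp(−Σ_i y_i²/(2t)) h_n(y)²`. -/
noncomputable def muLaw (n : ℕ) (t : ℝ) (y : Fin n → ℝ) : ℝ :=
  (Zconst n)⁻¹ * t ^ (-((n : ℝ) ^ 2) / 2) * Real.exp (-(∑ i, (y i) ^ 2) / (2 * t))
    * (vand n y) ^ 2

/-- The chamber `W^n = {x : x_1 ≤ … ≤ x_n}`. -/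
def Wcham (n : ℕ) : Set (Fin n → ℝ) := {x | Monotone x}

/-
Write `E_i = exp(-x_i² / (2s))`. On the chamber, Andréief's identity turns the integral of
`det(x_i^j E_i) det(φ_t(x'_j - x_i))` into the determinant of the one-dimensional integrals
`∫ y^j exp(-y² / (2s)) φ_t(x'_i - y) dy`. Completing the square, each of these is, up to a factor
proportional to `φ_{t+s}(x'_i)`, the `j`-th moment of a Gaussian with mean `c x'_i`, `c = s / (t+s)`,
and variance not depending on `i`. That moment is a monic polynomial of degree `j` in `c x'_i`, so
column operations reduce the determinant to the Vandermonde determinant of `c x'`, whose homogeneity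
factor `c^(n(n-1)/2)` turns the normalisation in `s` into the one in `t+s`.
-/

open ProbabilityTheory Polynomial
open scoped NNReal

section Permutation

variable {ι α : Type*} [MeasurableSpace α]

lemma measurePreserving_arrowCongr_perm [Fintype ι] (μ : Measure α) [SigmaFinite μ]
    (σ : Equiv.Perm ι) :
    MeasurePreserving (MeasurableEquiv.arrowCongr' σ.symm (MeasurableEquiv.refl α))
      (Measure.pi fun _ => μ) (Measure.pi fun _ => μ) :=
  measurePreserving_arrowCongr' _ _ _ _ fun _ => MeasurePreserving.id μ

lemma arrowCongr_perm_apply (σ : Equiv.Perm ι) (x : ι → α) :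
    MeasurableEquiv.arrowCongr' σ.symm (MeasurableEquiv.refl α) x = x ∘ σ := rfl

end Permutation

section Chamber

variable {n : ℕ} {α : Type*} [MeasurableSpace α]

lemma ae_injective_pi [MeasurableEq α] (μ : Fin n → Measure α) [∀ i, SigmaFinite (μ i)]
    [∀ i, NullSingletonClass (μ i)] :
    ∀ᵐ x ∂Measure.pi μ, Function.Injective x := by
  have ae_ne (i j : Fin n) (hij : i ≠ j) : ∀ᵐ x ∂Measure.pi μ, x i ≠ x j := by
    obtain _ | m := n
    · exact i.elim0
    obtain ⟨k, rfl⟩ := Fin.exists_succAbove_eq hij.symm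
    have measurable_ne : MeasurableSet {p : α × (Fin m → α) | p.1 ≠ p.2 k} :=
      (measurableSet_eq_fun (by fun_prop) (by fun_prop)).compl
    have ae_prod : ∀ᵐ p ∂(μ i).prod (Measure.pi fun l => μ (i.succAbove l)), p.1 ≠ p.2 k :=
      (Measure.ae_prod_iff_ae_ae measurable_ne).2 <|
        ae_of_all _ fun a => (Measure.ae_eval_ne _ k a).mono fun _ => Ne.symm
    exact (measurePreserving_piFinSuccAbove μ i).quasiMeasurePreserving.ae ae_prod
  filter_upwards [ae_all_iff.2 fun i => ae_all_iff.2 fun j => ae_all_iff.2 (ae_ne i j)]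
    with x hx i j hxij
  by_contra hij
  exact hx i j hij hxij

variable [LinearOrder α] [TopologicalSpace α] [OrderClosedTopology α]
  [SecondCountableTopology α] [OpensMeasurableSpace α]

lemma integral_eq_sum_setIntegral_monotone_comp {E : Type*} [NormedAddCommGroup E]
    [NormedSpace ℝ E] (μ : Measure α) [SigmaFinite μ] [NullSingletonClass μ]
    {F : (Fin n → α) → E} (hF : Integrable F (Measure.pi fun _ => μ)) :
    ∫ x, F x ∂(Measure.pi fun _ => μ) =
      ∑ σ : Equiv.Perm (Fin n),
        ∫ x in {x | Monotone (x ∘ σ)}, F x ∂(Measure.pi fun _ => μ) := by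
  have measurable_chamber (σ : Equiv.Perm (Fin n)) :
      MeasurableSet {x : Fin n → α | Monotone (x ∘ σ)} :=
    isClosed_monotone.measurableSet.preimage
      (MeasurableEquiv.arrowCongr' σ.symm (MeasurableEquiv.refl α)).measurable
  have aedisjoint : Pairwise (Function.onFun (AEDisjoint (Measure.pi fun _ => μ))
      fun σ : Equiv.Perm (Fin n) => {x : Fin n → α | Monotone (x ∘ σ)}) := by
    intro σ τ hστ
    refine measure_mono_null ?_ (ae_iff.1 (ae_injective_pi fun _ : Fin n => μ))
    intro x hx hinj
    refine hστ (Equiv.ext fun i => hinj ?_)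
    exact congrFun (Tuple.unique_monotone hx.1 hx.2) i
  have cover : ⋃ σ : Equiv.Perm (Fin n), {x : Fin n → α | Monotone (x ∘ σ)} = Set.univ :=
    Set.eq_univ_of_forall fun x => Set.mem_iUnion.2 ⟨Tuple.sort x, Tuple.monotone_sort x⟩
  rw [← setIntegral_univ, ← cover, integral_iUnion_ae
    (fun σ => (measurable_chamber σ).nullMeasurableSet) aedisjoint hF.integrableOn, tsum_fintype]

lemma setIntegral_monotone_sum_comp_perm {E : Type*} [NormedAddCommGroup E] [NormedSpace ℝ E]
    (μ : Measure α) [SigmaFinite μ] [NullSingletonClass μ]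
    {F : (Fin n → α) → E} (hF : Integrable F (Measure.pi fun _ => μ)) :
    ∫ x in {x | Monotone x}, ∑ σ : Equiv.Perm (Fin n), F (x ∘ σ) ∂(Measure.pi fun _ => μ) =
      ∫ x, F x ∂(Measure.pi fun _ => μ) := by
  have hFσ (σ : Equiv.Perm (Fin n)) :
      Integrable (fun x => F (x ∘ σ)) (Measure.pi fun _ => μ) :=
    (measurePreserving_arrowCongr_perm μ σ).integrable_comp_of_integrable hF
  have setIntegral_comp (σ : Equiv.Perm (Fin n)) :
      ∫ x in {x | Monotone x}, F (x ∘ σ) ∂(Measure.pi fun _ => μ) =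
        ∫ x in {x | Monotone (x ∘ σ.symm)}, F x ∂(Measure.pi fun _ => μ) := by
    have preimage : MeasurableEquiv.arrowCongr' σ.symm (MeasurableEquiv.refl α) ⁻¹'
        {x | Monotone (x ∘ σ.symm)} = {x | Monotone x} := by
      ext x
      simp [arrowCongr_perm_apply, Function.comp_assoc]
    rw [← (measurePreserving_arrowCongr_perm μ σ).setIntegral_preimage_emb
      (MeasurableEquiv.measurableEmbedding _) F, preimage]
    rfl
  rw [integral_finsetSum _ fun σ _ => (hFσ σ).integrableOn,
    integral_eq_sum_setIntegral_monotone_comp μ hF]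
  simp_rw [setIntegral_comp]
  exact Equiv.sum_comp (Equiv.inv (Equiv.Perm (Fin n)))
    fun σ => ∫ x in {x | Monotone (x ∘ σ)}, F x ∂(Measure.pi fun _ => μ)

end Chamber

section DetProduct

variable {ι α R : Type*} [Fintype ι] [DecidableEq ι] [CommRing R] (f g : ι → α → R) (x : ι → α)

lemma prod_mul_det_eq_sum_prod :
    (∏ i, f i (x i)) * (Matrix.of fun i j => g j (x i)).det =
      ∑ σ : Equiv.Perm ι,
        ((Equiv.Perm.sign σ : ℤ) : R) * ∏ i, f i (x i) * g (σ i) (x i) := by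
  rw [← Matrix.det_transpose, Matrix.det_apply', Finset.mul_sum]
  refine Finset.sum_congr rfl fun σ _ => ?_
  simp only [Matrix.transpose_apply, Matrix.of_apply, Finset.prod_mul_distrib]
  ring

lemma det_mul_det_eq_sum_comp_perm :
    (Matrix.of fun i j => f j (x i)).det * (Matrix.of fun i j => g j (x i)).det =
      ∑ σ : Equiv.Perm ι,
        (∏ i, f i ((x ∘ σ) i)) * (Matrix.of fun i j => g j ((x ∘ σ) i)).det := by
  rw [Matrix.det_apply', Finset.sum_mul]
  refine Finset.sum_congr rfl fun σ _ => ?_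
  have det_comp : (Matrix.of fun i j => g j ((x ∘ σ) i)).det =
      (Equiv.Perm.sign σ : ℤ) * (Matrix.of fun i j => g j (x i)).det :=
    Matrix.det_permute σ (Matrix.of fun i j => g j (x i))
  rw [det_comp]
  simp only [Matrix.of_apply, Function.comp_apply]
  ring

end DetProduct

section DetIntegral

variable {ι α 𝕜 : Type*} [Fintype ι] [DecidableEq ι] [MeasurableSpace α] [RCLike 𝕜]
  {μ : Measure α} [SigmaFinite μ] {f g : ι → α → 𝕜}

lemma integrable_sign_mul_prod (hfg : ∀ i j, Integrable (fun y => f i y * g j y) μ)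
    (σ : Equiv.Perm ι) :
    Integrable (fun x : ι → α =>
      ((Equiv.Perm.sign σ : ℤ) : 𝕜) * ∏ i, f i (x i) * g (σ i) (x i))
      (Measure.pi fun _ => μ) :=
  (Integrable.fintype_prod (f := fun i y => f i y * g (σ i) y) fun i => hfg i (σ i)).const_mul _

lemma integrable_prod_mul_det (hfg : ∀ i j, Integrable (fun y => f i y * g j y) μ) :
    Integrable (fun x : ι → α => (∏ i, f i (x i)) * (Matrix.of fun i j => g j (x i)).det)
      (Measure.pi fun _ => μ) := by
  simp_rw [prod_mul_det_eq_sum_prod]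
  exact integrable_finsetSum _ fun σ _ => integrable_sign_mul_prod hfg σ

lemma integral_prod_mul_det (hfg : ∀ i j, Integrable (fun y => f i y * g j y) μ) :
    ∫ x : ι → α, (∏ i, f i (x i)) * (Matrix.of fun i j => g j (x i)).det
        ∂(Measure.pi fun _ => μ) =
      (Matrix.of fun i j => ∫ y, f i y * g j y ∂μ).det := by
  simp_rw [prod_mul_det_eq_sum_prod]
  rw [integral_finsetSum _ fun σ _ => integrable_sign_mul_prod hfg σ, ← Matrix.det_transpose,
    Matrix.det_apply']
  refine Finset.sum_congr rfl fun σ _ => ?_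
  rw [integral_const_mul, integral_fintype_prod_eq_prod fun i y => f i y * g (σ i) y]
  rfl

end DetIntegral

section Andreief

variable {α 𝕜 : Type*} [LinearOrder α] [TopologicalSpace α] [OrderClosedTopology α]
  [SecondCountableTopology α] [MeasurableSpace α] [OpensMeasurableSpace α] [RCLike 𝕜]

-- Andréief's identity; restricting to the chamber replaces the usual factor `n!`.
lemma setIntegral_monotone_det_mul_det {n : ℕ} {μ : Measure α} [SigmaFinite μ]
    [NullSingletonClass μ] {f g : Fin n → α → 𝕜}
    (hfg : ∀ i j, Integrable (fun y => f i y * g j y) μ) :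
    ∫ x in {x : Fin n → α | Monotone x},
        (Matrix.of fun i j => f j (x i)).det * (Matrix.of fun i j => g j (x i)).det
        ∂(Measure.pi fun _ => μ) =
      (Matrix.of fun i j => ∫ y, f i y * g j y ∂μ).det := by
  simp_rw [det_mul_det_eq_sum_comp_perm]
  rw [setIntegral_monotone_sum_comp_perm μ (integrable_prod_mul_det hfg),
    integral_prod_mul_det hfg]

end Andreief

section TranslatedMoment

/-- The `k`-th moment of the translate of `μ` by `m`, as a polynomial in `m`: the `k`-th Appell
polynomial attached to `μ`. -/
noncomputable def translatedMoment (μ : Measure ℝ) (k : ℕ) : ℝ[X] :=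
  ∑ i ∈ Finset.range (k + 1), C ((∫ y, y ^ (k - i) ∂μ) * (k.choose i : ℝ)) * X ^ i

lemma coeff_translatedMoment (μ : Measure ℝ) (k i : ℕ) :
    (translatedMoment μ k).coeff i =
      if i ≤ k then (∫ y, y ^ (k - i) ∂μ) * (k.choose i : ℝ) else 0 := by
  simp only [translatedMoment, finsetSum_coeff, coeff_C_mul_X_pow, Finset.sum_ite_eq,
    Finset.mem_range, Nat.lt_succ_iff]

lemma eval_translatedMoment {μ : Measure ℝ} {k : ℕ}
    (hμ : ∀ i ≤ k, Integrable (fun y => y ^ i) μ) (m : ℝ) :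
    (translatedMoment μ k).eval m = ∫ y, (y + m) ^ k ∂μ := by
  simp_rw [add_comm _ m, add_pow]
  rw [integral_finsetSum _ fun i _ =>
    ((hμ (k - i) (Nat.sub_le k i)).const_mul (m ^ i)).mul_const _]
  simp_rw [integral_mul_const, integral_const_mul, translatedMoment, eval_finsetSum, eval_mul,
    eval_C, eval_pow, eval_X]
  exact Finset.sum_congr rfl fun i _ => by ring

variable (μ : Measure ℝ) [IsProbabilityMeasure μ] (k : ℕ)

lemma natDegree_translatedMoment : (translatedMoment μ k).natDegree = k := by
  refine natDegree_eq_of_le_of_coeff_ne_zero (natDegree_le_iff_coeff_eq_zero.2 fun i hi => ?_) ?_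
  · rw [coeff_translatedMoment, if_neg (by omega)]
  · simp [coeff_translatedMoment]

lemma monic_translatedMoment : (translatedMoment μ k).Monic := by
  rw [Monic, leadingCoeff, natDegree_translatedMoment]
  simp [coeff_translatedMoment]

variable {μ}

lemma det_integral_add_pow {n : ℕ} (hμ : ∀ k : ℕ, Integrable (fun y => y ^ k) μ)
    (m : Fin n → ℝ) :
    (Matrix.of fun i j : Fin n => ∫ y, (y + m i) ^ (j : ℕ) ∂μ).det =
      (Matrix.vandermonde m).det := by
  simp_rw [← eval_translatedMoment (fun i _ => hμ i)]
  exact (Matrix.det_eval_matrixOfPolynomials_eq_det_vandermonde m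
    (fun j => translatedMoment μ j) (fun _ => natDegree_translatedMoment μ _)
    fun _ => monic_translatedMoment μ _).symm

end TranslatedMoment

section Gauss

lemma integrable_pow_gaussianReal (m : ℝ) (v : ℝ≥0) (k : ℕ) :
    Integrable (fun y => y ^ k) (gaussianReal m v) :=
  integrable_pow_of_mem_interior_integrableExpSet (X := id) (by simp) k

lemma gauss_sub_eq_gaussianPDFReal (m : ℝ) (v : ℝ≥0) (y : ℝ) :
    gauss v (y - m) = gaussianPDFReal m v y := rfl

lemma integrable_pow_mul_gaussianPDFReal (m : ℝ) {v : ℝ≥0} (hv : v ≠ 0) (k : ℕ) :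
    Integrable (fun y => y ^ k * gaussianPDFReal m v y) := by
  have h := integrable_pow_gaussianReal m v k
  rw [gaussianReal_of_var_ne_zero _ hv, integrable_withDensity_iff (measurable_gaussianPDF _ _)
    (ae_of_all _ fun _ => gaussianPDF_lt_top)] at h
  simpa only [toReal_gaussianPDF] using h

lemma integral_pow_mul_gaussianPDFReal (m : ℝ) {v : ℝ≥0} (hv : v ≠ 0) (k : ℕ) :
    ∫ y, y ^ k * gaussianPDFReal m v y = ∫ y, (y + m) ^ k ∂gaussianReal 0 v := by
  have translate : (gaussianReal 0 v).map (· + m) = gaussianReal m v := by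
    rw [gaussianReal_map_add_const, zero_add]
  rw [← integral_map (f := fun y => y ^ k) (by fun_prop) (by fun_prop), translate,
    integral_gaussianReal_eq_integral_smul hv]
  simp_rw [smul_eq_mul, mul_comm]

variable {s t : ℝ}

lemma gauss_mul_gauss_sub (hs : 0 < s) (ht : 0 < t) (x y : ℝ) :
    gauss s y * gauss t (x - y) =
      gauss (t + s) x * gauss (s * t / (t + s)) (y - s / (t + s) * x) := by
  have sqrt_mul_sqrt : √(2 * π * s) * √(2 * π * t) =
      √(2 * π * (t + s)) * √(2 * π * (s * t / (t + s))) := by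
    rw [← Real.sqrt_mul (by positivity), ← Real.sqrt_mul (by positivity)]
    congr 1
    field_simp
  have complete_square : -y ^ 2 / (2 * s) + -(x - y) ^ 2 / (2 * t) =
      -x ^ 2 / (2 * (t + s)) + -(y - s / (t + s) * x) ^ 2 / (2 * (s * t / (t + s))) := by
    field_simp
    ring
  unfold gauss
  rw [mul_mul_mul_comm, ← mul_inv, ← Real.exp_add, sqrt_mul_sqrt, complete_square, mul_inv,
    Real.exp_add, mul_mul_mul_comm]

lemma gauss_sub_mul_pow_mul_gauss (hs : 0 < s) (ht : 0 < t) (x y : ℝ) (k : ℕ) :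
    gauss t (x - y) * (y ^ k * gauss s y) = gauss (t + s) x *
      (y ^ k * gaussianPDFReal (s / (t + s) * x) (s * t / (t + s)).toNNReal y) := by
  rw [← gauss_sub_eq_gaussianPDFReal, Real.coe_toNNReal _ (by positivity)]
  linear_combination y ^ k * gauss_mul_gauss_sub hs ht x y

lemma toNNReal_bridge_variance_ne_zero (hs : 0 < s) (ht : 0 < t) :
    (s * t / (t + s)).toNNReal ≠ 0 :=
  (Real.toNNReal_pos.2 (by positivity)).ne'

lemma integrable_gauss_sub_mul_pow_mul_gauss (hs : 0 < s) (ht : 0 < t) (x : ℝ) (k : ℕ) :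
    Integrable (fun y => gauss t (x - y) * (y ^ k * gauss s y)) := by
  simp_rw [gauss_sub_mul_pow_mul_gauss hs ht]
  exact (integrable_pow_mul_gaussianPDFReal _
    (toNNReal_bridge_variance_ne_zero hs ht) k).const_mul _

lemma integral_gauss_sub_mul_pow_mul_gauss (hs : 0 < s) (ht : 0 < t) (x : ℝ) (k : ℕ) :
    ∫ y, gauss t (x - y) * (y ^ k * gauss s y) = gauss (t + s) x *
      ∫ y, (y + s / (t + s) * x) ^ k ∂gaussianReal 0 (s * t / (t + s)).toNNReal := by
  simp_rw [gauss_sub_mul_pow_mul_gauss hs ht]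
  rw [integral_const_mul,
    integral_pow_mul_gaussianPDFReal _ (toNNReal_bridge_variance_ne_zero hs ht)]

end Gauss

section EntranceLaw

variable {n : ℕ} {s t : ℝ}

lemma vand_eq_det_vandermonde (x : Fin n → ℝ) : vand n x = (Matrix.vandermonde x).det := by
  rw [Matrix.det_vandermonde, vand]
  exact Finset.prod_comm' (by simp)

lemma vand_const_mul (c : ℝ) (x : Fin n → ℝ) :
    vand n (fun i => c * x i) = c ^ n.choose 2 * vand n x := by
  simp_rw [vand, ← mul_sub, Finset.prod_mul_distrib, Finset.prod_const, Fin.card_Iio]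
  rw [Finset.prod_pow_eq_pow_sum, Fin.sum_univ_eq_sum_range (fun i => i), Finset.sum_range_id,
    Nat.choose_two_right]

lemma prod_gauss (t : ℝ) (y : Fin n → ℝ) :
    ∏ i, gauss t (y i) = (√(2 * π * t) ^ n)⁻¹ * Real.exp (-(∑ i, y i ^ 2) / (2 * t)) := by
  simp_rw [gauss, Finset.prod_mul_distrib, Finset.prod_const, Finset.card_univ, Fintype.card_fin,
    inv_pow, ← Real.exp_sum, ← Finset.sum_div, Finset.sum_neg_distrib]

lemma inv_Zconst_mul_rpow (n : ℕ) (ht : 0 < t) :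
    (Zconst n)⁻¹ * t ^ (-((n : ℝ) ^ 2) / 2) =
      (∏ j ∈ Finset.range n, (j.factorial : ℝ))⁻¹ * (t ^ n.choose 2)⁻¹ *
        (√(2 * π * t) ^ n)⁻¹ := by
  have sqrt_pow : √(2 * π * t) ^ n = (2 * π) ^ ((n : ℝ) / 2) * t ^ ((n : ℝ) / 2) := by
    rw [Real.sqrt_eq_rpow, ← Real.rpow_mul_natCast (by positivity), one_div_mul_eq_div,
      Real.mul_rpow (by positivity) ht.le]
  have rpow_split : t ^ (-((n : ℝ) ^ 2) / 2) = (t ^ n.choose 2)⁻¹ * (t ^ ((n : ℝ) / 2))⁻¹ := by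
    rw [← Real.rpow_natCast t, ← Real.rpow_neg ht.le, ← Real.rpow_neg ht.le, ← Real.rpow_add ht,
      Nat.cast_choose_two]
    congr 1
    ring
  rw [Zconst, sqrt_pow, rpow_split]
  simp only [mul_inv]
  ring

lemma inv_Zconst_mul_rpow_mul_exp (ht : 0 < t) (y : Fin n → ℝ) :
    (Zconst n)⁻¹ * t ^ (-((n : ℝ) ^ 2) / 2) * Real.exp (-(∑ i, y i ^ 2) / (2 * t)) =
      (∏ j ∈ Finset.range n, (j.factorial : ℝ))⁻¹ * (t ^ n.choose 2)⁻¹ *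
        ∏ i, gauss t (y i) := by
  rw [inv_Zconst_mul_rpow n ht, prod_gauss, mul_assoc _ _ (Real.exp _)]

lemma prod_gauss_mul_vand (s : ℝ) (x : Fin n → ℝ) :
    (∏ i, gauss s (x i)) * vand n x =
      (Matrix.of fun i j : Fin n => x i ^ (j : ℕ) * gauss s (x i)).det := by
  rw [vand_eq_det_vandermonde, ← Matrix.det_mul_column]
  simp_rw [Matrix.vandermonde_apply, mul_comm]

lemma setIntegral_Wcham_pKer_mul_prod_gauss_mul_vand (hs : 0 < s) (ht : 0 < t)
    (x' : Fin n → ℝ) :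
    ∫ x in Wcham n, pKer n t x x' * ((∏ i, gauss s (x i)) * vand n x) =
      (∏ i, gauss (t + s) (x' i)) * ((s / (t + s)) ^ n.choose 2 * vand n x') := by
  set ν := gaussianReal 0 (s * t / (t + s)).toNNReal
  calc ∫ x in Wcham n, pKer n t x x' * ((∏ i, gauss s (x i)) * vand n x)
    _ = (Matrix.of fun i j : Fin n =>
          ∫ y, gauss t (x' i - y) * (y ^ (j : ℕ) * gauss s y)).det := by
      simp_rw [prod_gauss_mul_vand]
      exact setIntegral_monotone_det_mul_det (f := fun i y => gauss t (x' i - y))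
        (g := fun j y => y ^ (j : ℕ) * gauss s y)
        fun i j => integrable_gauss_sub_mul_pow_mul_gauss hs ht (x' i) j
    _ = (∏ i, gauss (t + s) (x' i)) *
          (Matrix.of fun i j : Fin n => ∫ y, (y + s / (t + s) * x' i) ^ (j : ℕ) ∂ν).det := by
      rw [← Matrix.det_mul_column]
      simp_rw [integral_gauss_sub_mul_pow_mul_gauss hs ht, Matrix.of_apply, ν]
    _ = (∏ i, gauss (t + s) (x' i)) * ((s / (t + s)) ^ n.choose 2 * vand n x') := by
      rw [det_integral_add_pow (integrable_pow_gaussianReal 0 _), ← vand_eq_det_vandermonde,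
        vand_const_mul]

end EntranceLaw

theorem stmt10_general (n : ℕ) {s t : ℝ} (hs : 0 < s) (ht : 0 < t) (x' : Fin n → ℝ) :
    ∫ x in Wcham n,
        (Zconst n)⁻¹ * s ^ (-((n : ℝ) ^ 2) / 2) * Real.exp (-(∑ i, (x i) ^ 2) / (2 * s))
          * vand n x * vand n x' * pKer n t x x'
      = muLaw n (t + s) x' := by
  have integrand_eq (x : Fin n → ℝ) :
      (Zconst n)⁻¹ * s ^ (-((n : ℝ) ^ 2) / 2) * Real.exp (-(∑ i, (x i) ^ 2) / (2 * s))
          * vand n x * vand n x' * pKer n t x x' =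
        (∏ j ∈ Finset.range n, (j.factorial : ℝ))⁻¹ * (s ^ n.choose 2)⁻¹ * vand n x' *
          (pKer n t x x' * ((∏ i, gauss s (x i)) * vand n x)) := by
    rw [inv_Zconst_mul_rpow_mul_exp hs]
    ring
  simp_rw [integrand_eq]
  rw [integral_const_mul, setIntegral_Wcham_pKer_mul_prod_gauss_mul_vand hs ht, muLaw,
    inv_Zconst_mul_rpow_mul_exp (by positivity), div_pow]
  field_simp

/-- `(μ^n_t)_{t>0}` is an entrance law for the kernel `p^{n,+}_t`:
`∫_{W^n} μ^n_s(x) (h_n(x')/h_n(x)) p^n_t(x,x') dx = μ^n_{t+s}(x')`, written in the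
division-free form where `μ^n_s(x)(h_n(x')/h_n(x))` is replaced by
`Z_n^{−1} s^{−n²/2} exp(−Σ_i x_i²/(2s)) h_n(x) h_n(x')`. -/
theorem stmt10 (n : ℕ) (hn : 1 ≤ n) (s t : ℝ) (hs : 0 < s) (ht : 0 < t)
    (x' : Fin n → ℝ) (hx' : x' ∈ Wcham n) :
    ∫ x in Wcham n,
        (Zconst n)⁻¹ * s ^ (-((n : ℝ) ^ 2) / 2) * Real.exp (-(∑ i, (x i) ^ 2) / (2 * s))
          * vand n x * vand n x' * pKer n t x x'
      = muLaw n (t + s) x' :=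
  stmt10_general n hs ht x'
end
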